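/- For every n ≥ k: D_{n-k} is a proper prefix of s_n; writing s_n = U_n V_n with U_n = D_{n-k} and V_n the remaining (nonempty) suffix, both U_n and V_n are palindromes, and this factorization is unique in the following sense: whenever s_n = P · Q with P and Q palindromes and Q nonempty, then P = U_n and Q = V_n. -/

import Mathlib

/-!
The words are images of letters under a morphism: `s_n = (ψ₁^{d₁} ∘ ⋯ ∘ ψ_n^{d_n})(a_{n+1})`,
letters being indexed modulo `k`, where `ψ_m` fixes `a_m` and maps every other `x` to `a_m x`.
Write `f n i` for the image of the letter number `i` and `E_n = s_{n-1}^{d_n} ⋯ s_0^{d_1}`.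

* Palindromes. By induction on `n`, `E_n` is a palindrome and `f n i · E_n = E_n · (f n i)~` for
  every letter (`conj`). Hence every `s_n^p E_n`, in particular `D_n`, is a palindrome. Unfolding
  the recursions gives `s_n D_{n-k} = E_n` for `n ≥ k`, and reversing this gives
  `s_n D_{n-k} = D_{n-k} s_n~`.
* Lengths. By induction, `|E_n| < |f n i| + |f n j|` for `i ≠ j` (`E_length_lt`). This yields
  `|D_{n-k}| < |s_{n-k+1}| ≤ |s_n|`, so `D_{n-k}` is a proper prefix of `s_n`, say
  `s_n = D_{n-k} V`. Then `E_n = D_{n-k} V D_{n-k}` is a palindrome, and so is `V`.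
* Uniqueness. Each elementary step is invertible over `ℤ` on the vectors of letter counts, so
  some integer weighting of the letters gives `s_n` weight `1` (`exists_weight`). Two different
  factorizations into palindromes would write the reversed word as a product of two nonempty
  commuting words; weight is proportional to length on these (`comm_weight`), so `|s_n|` would
  divide the length of a proper nonempty factor (`pal_unique`).
-/

namespace Epi

variable {α : Type*}

/-- `pw w p` is the `p`-fold concatenation `w^p`. -/
def pw (w : List α) : ℕ → List α
  | 0 => []
  | p + 1 => w ++ pw w p

/-- `S k a d m` is the word `s_{m-(k-1)}` of the paper (shifted indexing: `m : ℕ`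
ranges over the indices `n ≥ 1-k`). -/
def S (k : ℕ) (a : ℕ → α) (d : ℕ → ℕ) : ℕ → List α
  | m =>
    if h : m < max k 1 then [a ((m + 1) % k + 1)]
    else
      ((List.range (k - 1)).map
          (fun j => pw (S k a d (m - 1 - j)) (d (m + 1 - k - j)))).flatten ++
        S k a d (m - max k 1)
  termination_by m => m
  decreasing_by all_goals omega

/-- `s k a d n` is the word `s_n`, for `n ≥ 0`. -/
def s (k : ℕ) (a : ℕ → α) (d : ℕ → ℕ) (n : ℕ) : List α :=
  S k a d (n + (k - 1))

/-- `D k a d n` is the word `D_n = s_n^{d_{n+1}-1} s_{n-1}^{d_n} ⋯ s_1^{d_2} s_0^{d_1}`. -/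
def D (k : ℕ) (a : ℕ → α) (d : ℕ → ℕ) (n : ℕ) : List α :=
  pw (s k a d n) (d (n + 1) - 1) ++
    ((List.range n).map (fun j => pw (s k a d (n - 1 - j)) (d (n - j)))).flatten

/-- `G k a d n r` is the word `G_{n,r}`: `s_n` with its prefix of length `|D_{n-r}|` removed. -/
def G (k : ℕ) (a : ℕ → α) (d : ℕ → ℕ) (n r : ℕ) : List α :=
  (s k a d n).drop (D k a d (n - r)).length

/-- `Om k a d n r` is the set `Ω_n^r` of singular `n`-words of the `r`-th kind. -/
def Om (k : ℕ) (a : ℕ → α) (d : ℕ → ℕ) (n r : ℕ) : Set (List α) :=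
  { w | w.length = (s k a d n).length ∧
      w <:+:
        ((((G k a d n r).reverse ++ D k a d (n - r) ++ G k a d n r).drop 1).dropLast) }

/-- `w` is a factor of the infinite word `𝐬`. -/
def FactorS (k : ℕ) (a : ℕ → α) (d : ℕ → ℕ) (w : List α) : Prop :=
  ∃ N, w <:+: s k a d N


/-- The images `f n i = (ψ₁^{d₁} ∘ ⋯ ∘ ψ_n^{d_n})(a_{i+1})` of the letters (numbered from `0`),
where `ψ_m` fixes the letter number `(m - 1) % k` and prepends that letter to every other one. -/
def f (k : ℕ) (a : ℕ → α) (d : ℕ → ℕ) : ℕ → ℕ → List α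
  | 0, i => [a (i + 1)]
  | n + 1, i => if i = n % k then f k a d n i
      else pw (f k a d n (n % k)) (d (n + 1)) ++ f k a d n i

/-- The palindromic prefix `E n = s_{n-1}^{d_n} ⋯ s_0^{d_1}`, so that `D_n` is
`s_n^{d_{n+1}-1} E n`. -/
def E (k : ℕ) (a : ℕ → α) (d : ℕ → ℕ) : ℕ → List α
  | 0 => []
  | n + 1 => pw (f k a d n (n % k)) (d (n + 1)) ++ E k a d n

/-! ### The two recursions -/

theorem mod_ne {k n t : ℕ} (h1 : n < t + k) (h2 : t < n) : n % k ≠ t % k := by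
  intro h
  have h3 : k ∣ n - t := (Nat.modEq_iff_dvd' h2.le).1 h.symm
  have := Nat.le_of_dvd (by omega) h3
  omega

/-- Letter `i` is unrolled through the last `j` steps, none of which fixes it. For `j > n` the
truncated subtractions are harmless because `d 0 = 0`. -/
theorem f_unroll (k : ℕ) (a : ℕ → α) (d : ℕ → ℕ) (hd0 : d 0 = 0) (n i j : ℕ)
    (h : ∀ t, n - j ≤ t → t < n → i ≠ t % k) :
    f k a d n i = ((List.range j).map
      (fun t => pw (f k a d (n - 1 - t) ((n - 1 - t) % k)) (d (n - t)))).flatten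
        ++ f k a d (n - j) i := by
  induction j with
  | zero => simp
  | succ j ih =>
    rw [ih (fun t ht => h t (by omega)), List.range_succ]
    simp only [List.map_append, List.flatten_append, List.map_cons, List.map_nil,
      List.flatten_cons, List.flatten_nil, List.append_nil, List.append_assoc]
    congr 1
    rcases Nat.lt_or_ge j n with hj | hj
    · obtain ⟨m, rfl⟩ : ∃ m, n = m + 1 + j := ⟨n - 1 - j, by omega⟩
      have e1 : m + 1 + j - j = m + 1 := by omega
      have e2 : m + 1 + j - (j + 1) = m := by omega
      have e3 : m + 1 + j - 1 - j = m := by omega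
      rw [e1, e2, e3, f, if_neg (h m (by omega) (by omega))]
    · have e1 : n - j = 0 := by omega
      have e2 : n - (j + 1) = 0 := by omega
      rw [e1, e2, hd0]
      simp [pw]

theorem s_eq_f (k : ℕ) (hk : 2 ≤ k) (a : ℕ → α) (d : ℕ → ℕ) (hd0 : d 0 = 0) (n : ℕ) :
    s k a d n = f k a d n (n % k) := by
  induction n using Nat.strong_induction_on with
  | _ n ih =>
    rcases Nat.eq_zero_or_pos n with rfl | hn
    · have e : k - 1 + 1 = k := by omega
      rw [s, S, dif_pos (by omega)]
      simp [f, e]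
    · rw [f_unroll k a d hd0 n (n % k) (k - 1) (fun t h1 h2 => mod_ne (by omega) h2), s, S,
        dif_neg (by omega)]
      congr 1
      · congr 1
        apply List.map_congr_left
        intro j hj
        rw [List.mem_range] at hj
        have e1 : n + (k - 1) + 1 - k - j = n - j := by omega
        rw [e1]
        rcases Nat.lt_or_ge j n with hjn | hjn
        · have e2 : n + (k - 1) - 1 - j = (n - 1 - j) + (k - 1) := by omega
          rw [e2, ← ih (n - 1 - j) (by omega), s]
        · have e2 : n - j = 0 := by omega
          rw [e2, hd0]
          rfl
      · have e0 : n + (k - 1) - max k 1 = n - 1 := by omega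
        rw [e0]
        rcases Nat.lt_or_ge n k with h | h
        · have e1 : n - (k - 1) = 0 := by omega
          have e2 : n - 1 + 1 = n := by omega
          rw [e1, S, dif_pos (by omega), e2, f]
        · obtain ⟨m, rfl⟩ : ∃ m, n = m + k := ⟨n - k, by omega⟩
          have e1 : m + k - (k - 1) = m + 1 := by omega
          have e2 : m + k - 1 = m + (k - 1) := by omega
          rw [e1, e2, Nat.add_mod_right, f, if_pos rfl, ← ih m (by omega), s]

theorem D_eq (k : ℕ) (hk : 2 ≤ k) (a : ℕ → α) (d : ℕ → ℕ) (hd0 : d 0 = 0) (n : ℕ) :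
    D k a d n = pw (f k a d n (n % k)) (d (n + 1) - 1) ++ E k a d n := by
  rw [D, s_eq_f k hk a d hd0]
  congr 1
  induction n with
  | zero => rfl
  | succ n ih =>
    rw [E, ← ih, List.range_succ_eq_map, List.map_cons, List.flatten_cons, List.map_map,
      ← s_eq_f k hk a d hd0]
    congr 3
    funext j
    have e1 : n + 1 - 1 - (j + 1) = n - 1 - j := by omega
    have e2 : n + 1 - (j + 1) = n - j := by omega
    simp only [Function.comp, Nat.succ_eq_add_one, e1, e2]

/-- If `E m` is `f m i` followed by `X`, this persists as long as no step fixes letter `i`. -/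
theorem f_append_eq_E (k : ℕ) (a : ℕ → α) (d : ℕ → ℕ) (m i : ℕ) (X : List α)
    (h0 : f k a d m i ++ X = E k a d m) (j : ℕ)
    (h : ∀ t, m ≤ t → t < m + j → i ≠ t % k) :
    f k a d (m + j) i ++ X = E k a d (m + j) := by
  induction j with
  | zero => exact h0
  | succ j ih =>
    rw [← Nat.add_assoc, f, if_neg (h _ (by omega) (by omega)), E, List.append_assoc,
      ih (fun t h1 h2 => h t h1 (by omega))]

/-! ### Palindromes -/

theorem pw_conj (w e : List α) (h : w ++ e = e ++ w.reverse) (p : ℕ) :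
    pw w p ++ e = e ++ (pw w p).reverse := by
  induction p with
  | zero => simp [pw]
  | succ p ih =>
    -- `w` commutes with its own powers
    have hc : ∀ q, w ++ pw w q = pw w q ++ w := by
      intro q
      induction q with
      | zero => simp [pw]
      | succ q iq => rw [pw, List.append_assoc, ← iq]
    have : pw w (p + 1) = pw w p ++ w := by rw [pw, hc]
    have hr := congrArg List.reverse (hc p)
    rw [List.reverse_append, List.reverse_append] at hr
    rw [this, List.append_assoc, h, ← List.append_assoc, ih, List.reverse_append,
      List.append_assoc, hr]

/-- The conjugation identity: `E n` is a palindrome, and it intertwines each `f n i` with its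
reversal. -/
theorem conj (k : ℕ) (a : ℕ → α) (d : ℕ → ℕ) (n : ℕ) :
    (E k a d n).reverse = E k a d n ∧
      ∀ i, f k a d n i ++ E k a d n = E k a d n ++ (f k a d n i).reverse := by
  induction n with
  | zero => simp [E, f]
  | succ n ih =>
    obtain ⟨hp, hc⟩ := ih
    have hx := pw_conj _ _ (hc (n % k)) (d (n + 1))
    refine ⟨by rw [E, List.reverse_append, hp, hx], fun i => ?_⟩
    rw [E, f]
    split_ifs with h
    · subst h
      have hp' := pw_conj _ _ (hc (n % k)) (d (n + 1) + 1)
      rw [pw, List.reverse_append, ← List.append_assoc, ← hx] at hp'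
      simpa using hp'
    · rw [List.reverse_append, List.append_assoc, List.append_assoc, hx,
        ← List.append_assoc (f k a d n i), hc i, List.append_assoc]

/-! ### Lengths -/

theorem length_le_pw (w : List α) (p : ℕ) (hp : 1 ≤ p) : w.length ≤ (pw w p).length := by
  obtain ⟨q, rfl⟩ : ∃ q, p = q + 1 := ⟨p - 1, by omega⟩
  simp [pw]

theorem f_length_mono (k : ℕ) (a : ℕ → α) (d : ℕ → ℕ) (i m j : ℕ) :
    (f k a d m i).length ≤ (f k a d (m + j) i).length := by
  induction j with
  | zero => rfl
  | succ j ih =>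
    refine ih.trans ?_
    rw [← Nat.add_assoc, f]
    split_ifs <;> simp

theorem E_length_lt (k : ℕ) (a : ℕ → α) (d : ℕ → ℕ) (n : ℕ) :
    ∀ i j, i ≠ j →
      (E k a d n).length < (f k a d n i).length + (f k a d n j).length := by
  induction n with
  | zero => intro i j _; simp [E, f]
  | succ n ih =>
    intro i j hij
    have := ih i j hij
    rw [E, f, f]
    split_ifs with h1 h2 h2
    · omega
    all_goals simp only [List.length_append]; omega

/-! ### Weights and uniqueness -/

theorem pw_weight (g : α → ℤ) (w : List α) (p : ℕ) :
    ((pw w p).map g).sum = p * (w.map g).sum := by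
  induction p with
  | zero => simp [pw]
  | succ p ih => simp [pw, ih]; ring

/-- The incidence matrix of the morphism is unimodular: the words `f n i` can be given
arbitrary prescribed integer weights by a suitable weighting of the letters. -/
theorem exists_weight (k : ℕ) (hk : 0 < k) (a : ℕ → α)
    (ha : ∀ i j, 1 ≤ i → i ≤ k → 1 ≤ j → j ≤ k → a i = a j → i = j) (d : ℕ → ℕ) (n : ℕ) :
    ∀ e : ℕ → ℤ, ∃ g : α → ℤ, ∀ i < k, ((f k a d n i).map g).sum = e i := by
  induction n with
  | zero =>
    intro e
    classical
    refine ⟨fun x => if h : ∃ i < k, a (i + 1) = x then e h.choose else 0, fun i hi => ?_⟩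
    have h : ∃ j < k, a (j + 1) = a (i + 1) := ⟨i, hi, rfl⟩
    have h1 := h.choose_spec
    have h2 := ha _ _ (by omega) (by omega) (by omega) (by omega) h1.2
    have h3 : h.choose = i := by omega
    simp only [f, List.map_cons, List.map_nil, List.sum_cons, List.sum_nil, add_zero]
    rw [dif_pos h, h3]
  | succ n ih =>
    intro e
    obtain ⟨g, hg⟩ := ih (fun i => if i = n % k then e i else e i - d (n + 1) * e (n % k))
    refine ⟨g, fun i hi => ?_⟩
    have hx := hg (n % k) (Nat.mod_lt _ hk)
    have hi' := hg i hi
    rw [if_pos rfl] at hx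
    rw [f]
    split_ifs with h
    · rw [hi', if_pos h]
    · rw [if_neg h] at hi'
      rw [List.map_append, List.sum_append, pw_weight, hx, hi']
      ring

/-- Commuting words have proportional weight and length. -/
theorem comm_weight (g : α → ℤ) (N : ℕ) : ∀ x y : List α, x.length + y.length ≤ N →
    x ++ y = y ++ x → (x.map g).sum * y.length = (y.map g).sum * x.length := by
  induction N with
  | zero =>
    intro x y h _
    have : x = [] := List.length_eq_zero_iff.1 (by omega)
    subst this
    simp
  | succ N ih =>
    have key : ∀ x y : List α, x.length ≤ y.length → x.length + y.length ≤ N + 1 →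
        x ++ y = y ++ x → (x.map g).sum * y.length = (y.map g).sum * x.length := by
      intro x y hl h hc
      rcases x with _ | ⟨b, x⟩
      · simp
      · have hpre : (b :: x) <+: y :=
          List.prefix_of_prefix_length_le ⟨y, rfl⟩ ⟨b :: x, hc.symm⟩ hl
        obtain ⟨z, rfl⟩ := hpre
        rw [List.append_assoc, List.append_cancel_left_eq] at hc
        have := ih (b :: x) z (by simp at h ⊢; omega) hc
        simp only [List.map_append, List.sum_append, List.length_append, Nat.cast_add]
        linear_combination this
    intro x y h hc
    rcases Nat.le_total x.length y.length with hl | hl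
    · exact key x y hl h hc
    · exact (key y x hl (by omega) hc.symm).symm

/-- A word of weight `1` has only one factorization into two palindromes, the second one
nonempty: two such factorizations would make a proper rotation fix the reversed word. -/
theorem pal_unique (g : α → ℤ) (P Q U V : List α) (h : P ++ Q = U ++ V)
    (hw : ((P ++ Q).map g).sum = 1) (hP : P.reverse = P) (hQ : Q.reverse = Q)
    (hU : U.reverse = U) (hV : V.reverse = V) (hne : V ≠ []) (hl : P.length ≤ U.length) :
    P = U ∧ Q = V := by
  have hpre : P <+: U := List.prefix_of_prefix_length_le ⟨Q, rfl⟩ ⟨V, h.symm⟩ hl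
  obtain ⟨z, rfl⟩ := hpre
  have hQz : Q = z ++ V := by
    rw [List.append_assoc, List.append_cancel_left_eq] at h
    exact h
  have hr := congrArg List.reverse h
  rw [List.reverse_append, List.reverse_append, hP, hQ, hU, hV, hQz] at hr
  have hc : z ++ (V ++ P) = (V ++ P) ++ z := by simpa using hr
  have hk := comm_weight g _ _ _ le_rfl hc
  rw [hQz] at hw
  simp only [List.map_append, List.sum_append, List.length_append, Nat.cast_add] at hk hw
  -- the length of the whole word divides `z.length`, which is strictly smaller
  have hk2 : (z.map g).sum * ((z.length + V.length + P.length : ℕ) : ℤ) = z.length := by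
    push_cast
    linear_combination hk + (z.length : ℤ) * hw
  have hdvd : z.length + V.length + P.length ∣ z.length := by
    have : ((z.length + V.length + P.length : ℕ) : ℤ) ∣ (z.length : ℤ) :=
      ⟨_, by rw [← hk2]; ring⟩
    exact_mod_cast this
  have hVpos := List.length_pos_iff.2 hne
  have hz : z = [] := by
    by_contra hz
    have := Nat.le_of_dvd (List.length_pos_iff.2 hz) hdvd
    omega
  subst hz
  simpa using hQz

theorem stmt5 {α : Type*} (k : ℕ) (hk : 2 ≤ k) (a : ℕ → α)
    (ha : ∀ i j, 1 ≤ i → i ≤ k → 1 ≤ j → j ≤ k → a i = a j → i = j)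
    (d : ℕ → ℕ) (hd0 : d 0 = 0) (hd : ∀ i, 1 ≤ i → 1 ≤ d i) (n : ℕ) (hn : k ≤ n) :
    (D k a d (n - k)).length < (s k a d n).length ∧
    s k a d n = D k a d (n - k) ++ (s k a d n).drop (D k a d (n - k)).length ∧
    (s k a d n).drop (D k a d (n - k)).length ≠ [] ∧
    (D k a d (n - k)).reverse = D k a d (n - k) ∧
    ((s k a d n).drop (D k a d (n - k)).length).reverse =
      (s k a d n).drop (D k a d (n - k)).length ∧
    ∀ P Q : List α, s k a d n = P ++ Q → P.reverse = P → Q.reverse = Q → Q ≠ [] →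
      P = D k a d (n - k) ∧ Q = (s k a d n).drop (D k a d (n - k)).length := by
  obtain ⟨m, rfl⟩ : ∃ m, n = m + k := ⟨n - k, by omega⟩
  rw [Nat.add_sub_cancel]
  have hsf := s_eq_f k hk a d hd0 (m + k)
  have hDf := D_eq k hk a d hd0 m
  have hmod : (m + k) % k = m % k := Nat.add_mod_right m k
  have hne1 : m % k ≠ (m + 1) % k := (mod_ne (by omega) (by omega)).symm
  -- `E (m + 1)` is `s_m D_m`
  have hE1 : f k a d (m + 1) (m % k) ++ D k a d m = E k a d (m + 1) := by
    obtain ⟨q, hq⟩ : ∃ q, d (m + 1) = q + 1 := ⟨d (m + 1) - 1, by have := hd (m + 1); omega⟩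
    rw [hDf, f, if_pos rfl, E, hq, Nat.add_sub_cancel, pw, List.append_assoc]
  have hE : s k a d (m + k) ++ D k a d m = E k a d (m + k) := by
    have h := f_append_eq_E k a d (m + 1) (m % k) _ hE1 (k - 1) (fun t h1 h2 => by
      rw [← hmod]
      exact mod_ne (by omega) (by omega))
    have e : m + 1 + (k - 1) = m + k := by omega
    rw [e] at h
    rw [hsf, hmod, h]
  have hDpal : (D k a d m).reverse = D k a d m := by
    obtain ⟨hp, hc⟩ := conj k a d m
    rw [hDf, List.reverse_append, hp, pw_conj _ _ (hc _)]
  have hlen : (D k a d m).length < (s k a d (m + k)).length := by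
    have h1 := congrArg List.length hE1
    have h2 := E_length_lt k a d (m + 1) _ _ hne1
    have h3 := f_length_mono k a d (m % k) (m + 2) (k - 2)
    have e : m + 2 + (k - 2) = m + k := by omega
    have h4 := length_le_pw (f k a d (m + 1) ((m + 1) % k)) (d (m + 1 + 1)) (hd _ (by omega))
    rw [e, f, if_neg hne1] at h3
    rw [hsf, hmod]
    simp only [List.length_append] at h1 h3
    omega
  have hrev : s k a d (m + k) ++ D k a d m = D k a d m ++ (s k a d (m + k)).reverse := by
    have h := (conj k a d (m + k)).1
    rw [← hE, List.reverse_append, hDpal] at h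
    exact h.symm
  obtain ⟨V, hV⟩ : D k a d m <+: s k a d (m + k) :=
    List.prefix_of_prefix_length_le ⟨_, hrev.symm⟩ ⟨_, rfl⟩ hlen.le
  have hdrop : (s k a d (m + k)).drop (D k a d m).length = V := by
    rw [← hV, List.drop_left]
  rw [hdrop]
  have hVne : V ≠ [] := by
    rintro rfl
    rw [← hV] at hlen
    simp at hlen
  have hVpal : V.reverse = V := by
    rw [← hV, List.reverse_append, hDpal, List.append_assoc, List.append_cancel_left_eq,
      List.append_cancel_right_eq] at hrev
    exact hrev.symm
  refine ⟨hlen, hV.symm, hVne, hDpal, hVpal, fun P Q hPQ hP hQ hQne => ?_⟩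
  obtain ⟨g, hg⟩ := exists_weight k (by omega) a ha d (m + k) (fun _ => 1)
  have hw := hg ((m + k) % k) (Nat.mod_lt _ (by omega))
  rw [← hsf] at hw
  rcases Nat.le_total P.length (D k a d m).length with hl | hl
  · exact pal_unique g P Q _ V (hPQ.symm.trans hV.symm) (hPQ ▸ hw) hP hQ hDpal hVpal hVne hl
  · obtain ⟨h1, h2⟩ := pal_unique g _ V P Q (hV.trans hPQ) (hV.symm ▸ hw) hDpal hVpal hP hQ
      hQne hl
    exact ⟨h1.symm, h2.symm⟩

end Epi
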